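/- arXiv:2502.17707 — 2 statements merged into one kernel-verified Lean document; each statement's English description precedes it below -/
import Mathlib

section
/- Let M be an everywhere non-Hausdorff n-manifold, let κ ≥ ℵ₁ be a cardinal, let U ⊆ M be an Euclidean subset, let A ⊆ U be κ-Baire in M, let S be a scan of A in M, let E ⊆ U be dense in U, and let λ < κ be a cardinal. Then there is no family 𝒱 of open Hausdorff subsets of M which covers S and is point-λ on E. -/
open Set Topology TopologicalSpace

universe u

/-- Two points are inseparable (`x ⋈ y`): distinct, and every open set containing
one meets every open set containing the other. -/
def Bump {X : Type u} [TopologicalSpace X] (x y : X) : Prop :=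
  x ≠ y ∧ ∀ U V : Set X, IsOpen U → IsOpen V → x ∈ U → y ∈ V → (U ∩ V).Nonempty

/-- `NH A` = points inseparable from some point of `A`. -/
def NH {X : Type u} [TopologicalSpace X] (A : Set X) : Set X :=
  {y | ∃ x ∈ A, Bump y x}

/-- `NHpt x = NH {x}`. -/
def NHpt {X : Type u} [TopologicalSpace X] (x : X) : Set X := NH {x}

/-- An Euclidean subset: open and homeomorphic to ℝⁿ. -/
def IsEuclidean {X : Type u} [TopologicalSpace X] (n : ℕ) (U : Set X) : Prop :=
  IsOpen U ∧ Nonempty (U ≃ₜ EuclideanSpace ℝ (Fin n))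

/-- An `n`-manifold: nonempty connected space, every point has an open
neighborhood homeomorphic to ℝⁿ (Hausdorffness NOT assumed). -/
def IsNManifold (X : Type u) [TopologicalSpace X] (n : ℕ) : Prop :=
  ConnectedSpace X ∧ ∀ x : X, ∃ U : Set X, x ∈ U ∧ IsEuclidean n U

/-- Locally Hausdorff space. -/
def LocallyHausdorff (X : Type u) [TopologicalSpace X] : Prop :=
  ∀ x : X, ∃ U : Set X, IsOpen U ∧ x ∈ U ∧ T2Space U

/-- Quasi-countably-compact subset: every countable open cover has a finite subcover. -/
def QuasiCountablyCompact {X : Type u} [TopologicalSpace X] (K : Set X) : Prop :=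
  ∀ U : ℕ → Set X, (∀ n, IsOpen (U n)) → K ⊆ ⋃ n, U n →
    ∃ s : Finset ℕ, K ⊆ ⋃ n ∈ s, U n

/-- `A` is `κ`-Baire in `X`: not covered by fewer than `κ` nowhere dense sets. -/
def KappaBaire {X : Type u} [TopologicalSpace X] (κ : Cardinal.{u}) (A : Set X) : Prop :=
  ∀ (ι : Type u) (F : ι → Set X), Cardinal.mk ι < κ →
    (∀ i, IsNowhereDense (F i)) → ¬ A ⊆ ⋃ i, F i

/-- `S` is a scan of `A` in `X`. -/
def IsScan {X : Type u} [TopologicalSpace X] (S A : Set X) : Prop :=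
  S ⊆ NH A ∧ ∀ x ∈ A, ((NHpt x).Nonempty ↔ (NHpt x ∩ S).Nonempty)

/-- `U` is sorted: a continuous map from `closure U` to a Hausdorff space,
injective on `U`. -/
def IsSorted {X : Type u} [TopologicalSpace X] (U : Set X) : Prop :=
  ∃ (H : Type u) (tH : TopologicalSpace H) (f : closure U → H),
    @T2Space H tH ∧ @Continuous _ H _ tH f ∧
      ∀ a b : closure U, (a : X) ∈ U → (b : X) ∈ U → f a = f b → a = b

/-- `U` is weakly sorted: a continuous map from `closure U` to a Hausdorff space,
finite-to-one on `U`. -/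
def IsWeaklySorted {X : Type u} [TopologicalSpace X] (U : Set X) : Prop :=
  ∃ (H : Type u) (tH : TopologicalSpace H) (f : closure U → H),
    @T2Space H tH ∧ @Continuous _ H _ tH f ∧
      ∀ h : H, {a : closure U | (a : X) ∈ U ∧ f a = h}.Finite

/-- H-maximal: open Hausdorff, with no open Hausdorff proper superset. -/
def IsHMaximal {X : Type u} [TopologicalSpace X] (U : Set X) : Prop :=
  IsOpen U ∧ T2Space U ∧
    ∀ V : Set X, IsOpen V → T2Space V → U ⊆ V → V = U

/-- CH-maximal: connected open Hausdorff, with no connected open Hausdorff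
proper superset. -/
def IsCHMaximal {X : Type u} [TopologicalSpace X] (U : Set X) : Prop :=
  IsConnected U ∧ IsOpen U ∧ T2Space U ∧
    ∀ V : Set X, IsConnected V → IsOpen V → T2Space V → U ⊆ V → V = U

/-- `U` is f-simple at `p`: every open `V ∋ p` contains an open `W ∋ p` such that
`W ∩ U` has finitely many connected components. -/
def FSimpleAt {X : Type u} [TopologicalSpace X] (U : Set X) (p : X) : Prop :=
  ∀ V : Set X, IsOpen V → p ∈ V → ∃ W : Set X, IsOpen W ∧ p ∈ W ∧ W ⊆ V ∧
    {C : Set X | ∃ z ∈ W ∩ U, C = connectedComponentIn (W ∩ U) z}.Finite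

/-- f-rim-simple: f-simple at every boundary point. -/
def FRimSimple {X : Type u} [TopologicalSpace X] (U : Set X) : Prop :=
  ∀ p ∈ closure U \ U, FSimpleAt U p

/-- cov(ℳ): least cardinality of a family of nowhere dense subsets of ℝ covering ℝ. -/
noncomputable def covMeager : Cardinal :=
  sInf {c : Cardinal | ∃ (ι : Type) (F : ι → Set ℝ),
    Cardinal.mk ι = c ∧ (∀ i, IsNowhereDense (F i)) ∧ ⋃ i, F i = Set.univ}

/-- A locally compact first countable S-space: Hausdorff, regular, locally compact,
first countable, hereditarily separable, not Lindelöf. -/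
def IsLCFCSSpace (S : Type) [TopologicalSpace S] : Prop :=
  T2Space S ∧ RegularSpace S ∧ LocallyCompactSpace S ∧
    FirstCountableTopology S ∧ (∀ A : Set S, SeparableSpace A) ∧ ¬ LindelofSpace S

/-!
Let `x ∈ A`, and let `V ∈ 𝒱` be an open Hausdorff set containing a point of `S` inseparable
from `x`. Inseparability puts `x` in the closure of `V`, and the Hausdorff property of `V` keeps it
out of `V`, so `x` lies on the frontier of `V`, which is nowhere dense. Moreover `V` meets every
neighbourhood of `x`, hence meets any set `D` dense near `x`. If `D` has fewer than `κ` points and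
each of them lies in at most `λ` members of `𝒱`, then fewer than `κ` such sets `V` occur, and their
frontiers cover `A`, so `A` is not `κ`-Baire. A Euclidean set is hereditarily separable, so `D` can
be taken to be a countable dense subset of `E`.
-/

open Cardinal

section Inseparable

variable {X : Type u} [TopologicalSpace X] {x y : X} {V : Set X}

theorem bump_iff_not_disjoint_nhds : Bump x y ↔ x ≠ y ∧ ¬ Disjoint (𝓝 x) (𝓝 y) := by
  simp only [Bump, (nhds_basis_opens x).disjoint_iff (nhds_basis_opens y),
    not_disjoint_iff_nonempty_inter, not_exists, not_and]
  exact and_congr_right fun _ ↦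
    ⟨fun h U hU V hV ↦ h U V hU.2 hV.2 hU.1 hV.1, fun h U V hU hV hx hy ↦ h U ⟨hx, hU⟩ V ⟨hy, hV⟩⟩

theorem Bump.mem_closure (hxy : Bump x y) (hV : V ∈ 𝓝 x) : y ∈ closure V := by
  by_contra hy
  exact (bump_iff_not_disjoint_nhds.1 hxy).2
    (Filter.disjoint_of_disjoint_of_mem (disjoint_compl_right.mono_left subset_closure) hV
      (isClosed_closure.isOpen_compl.mem_nhds hy))

theorem Bump.notMem_of_t2Space (hxy : Bump x y) (hV : IsOpen V) [T2Space V] (hx : x ∈ V) :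
    y ∉ V := by
  obtain ⟨hne, hnhds⟩ := bump_iff_not_disjoint_nhds.1 hxy
  intro hy
  refine hnhds ?_
  have hdisj : Disjoint (𝓝 (⟨x, hx⟩ : V)) (𝓝 ⟨y, hy⟩) :=
    disjoint_nhds_nhds.2 fun h ↦ hne (congrArg Subtype.val h)
  simpa only [hV.isOpenEmbedding_subtypeVal.map_nhds_eq] using
    (Filter.disjoint_map Subtype.val_injective).2 hdisj

theorem Bump.mem_frontier (hxy : Bump x y) (hV : IsOpen V) [T2Space V] (hx : x ∈ V) :
    y ∈ frontier V :=
  hV.frontier_eq ▸ ⟨hxy.mem_closure (hV.mem_nhds hx), hxy.notMem_of_t2Space hV hx⟩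

theorem mem_NHpt_iff : y ∈ NHpt x ↔ Bump y x := by
  simp only [NHpt, NH, mem_singleton_iff, exists_eq_left, mem_ofPred_eq]

end Inseparable

theorem isNowhereDense_frontier_of_isOpen {X : Type*} [TopologicalSpace X] {V : Set X}
    (hV : IsOpen V) : IsNowhereDense (frontier V) := by
  rw [isClosed_frontier.isNowhereDense_iff, ← frontier_compl]
  exact interior_frontier hV.isClosed_compl

theorem mk_setOf_inter_nonempty_le {X : Type u} {𝒱 : Set (Set X)} {D : Set X} {lam : Cardinal.{u}}
    (hD : ∀ x ∈ D, #{V ∈ 𝒱 | x ∈ V} ≤ lam) :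
    #{V ∈ 𝒱 | (D ∩ V).Nonempty} ≤ #D * lam := by
  have hUnion : {V ∈ 𝒱 | (D ∩ V).Nonempty} = ⋃ x ∈ D, {V ∈ 𝒱 | x ∈ V} := by
    ext V
    simp only [Set.Nonempty, mem_inter_iff, mem_ofPred_eq, mem_iUnion, exists_prop]
    tauto
  calc #{V ∈ 𝒱 | (D ∩ V).Nonempty}
      ≤ #D * ⨆ x : D, #{V ∈ 𝒱 | x.1 ∈ V} := hUnion ▸ mk_biUnion_le _ _
    _ ≤ #D * lam := by gcongr; exact ciSup_le' fun x ↦ hD x x.2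

theorem subset_iUnion_frontier_of_inseparable_mem_sUnion {X : Type u} [TopologicalSpace X]
    {A S D : Set X} {𝒱 : Set (Set X)}
    (hS : ∀ x ∈ A, (NHpt x ∩ S).Nonempty) (hAD : A ⊆ interior (closure D))
    (h𝒱 : ∀ V ∈ 𝒱, IsOpen V ∧ T2Space V) (hcov : S ⊆ ⋃₀ 𝒱) :
    A ⊆ ⋃ V : {V ∈ 𝒱 | (D ∩ V).Nonempty}, frontier V.1 := by
  intro x hx
  obtain ⟨s, hsx, hsS⟩ := hS x hx
  rw [mem_NHpt_iff] at hsx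
  obtain ⟨V, hV𝒱, hsV⟩ := hcov hsS
  obtain ⟨hV, _⟩ := h𝒱 V hV𝒱
  have hDV : (D ∩ V).Nonempty := by
    refine (closure_inter_open_nonempty_iff hV).1 ?_
    exact (hsx.2 V _ hV isOpen_interior hsV (hAD hx)).mono
      fun y hy ↦ ⟨interior_subset hy.2, hy.1⟩
  exact mem_iUnion.2 ⟨⟨V, hV𝒱, hDV⟩, hsx.mem_frontier hV hsV⟩

theorem exists_countable_subset_subset_closure {X : Type*} [TopologicalSpace X] (E : Set X)
    [SeparableSpace E] : ∃ D ⊆ E, D.Countable ∧ E ⊆ closure D := by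
  obtain ⟨D, hDc, hD⟩ := exists_countable_dense E
  exact ⟨Subtype.val '' D, Subtype.coe_image_subset E D, hDc.image _,
    fun x hx ↦ closure_subtype.1 (hD ⟨x, hx⟩)⟩

theorem IsEuclidean.separableSpace_of_subset {X : Type u} [TopologicalSpace X] {n : ℕ}
    {U E : Set X} (hU : IsEuclidean n U) (hEU : E ⊆ U) : SeparableSpace E := by
  obtain ⟨φ⟩ := hU.2
  have : SecondCountableTopology E :=
    (φ.isEmbedding.comp (IsEmbedding.inclusion hEU)).secondCountableTopology
  infer_instance

theorem stmt2_general {X : Type u} [TopologicalSpace X] {κ : Cardinal.{u}} (hκ : ℵ₀ ≤ κ)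
    {A : Set X} (hA : KappaBaire κ A) {S : Set X} (hS : ∀ x ∈ A, (NHpt x ∩ S).Nonempty)
    {D E : Set X} (hDE : D ⊆ E) (hDκ : #D < κ) (hED : E ⊆ closure D)
    (hAE : A ⊆ interior (closure E))
    {lam : Cardinal.{u}} (hlam : lam < κ)
    {𝒱 : Set (Set X)} (h𝒱 : ∀ V ∈ 𝒱, IsOpen V ∧ T2Space V) :
    ¬ (S ⊆ ⋃₀ 𝒱 ∧ ∀ x ∈ E, #{V ∈ 𝒱 | x ∈ V} ≤ lam) := by
  rintro ⟨hcov, hpt⟩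
  have hAD : A ⊆ interior (closure D) :=
    hAE.trans (interior_mono (closure_minimal hED isClosed_closure))
  exact hA _ (fun V : {V ∈ 𝒱 | (D ∩ V).Nonempty} ↦ frontier V.1)
    ((mk_setOf_inter_nonempty_le fun x hx ↦ hpt x (hDE hx)).trans_lt (mul_lt_of_lt hκ hDκ hlam))
    (fun V ↦ isNowhereDense_frontier_of_isOpen (h𝒱 V V.2.1).1)
    (subset_iUnion_frontier_of_inseparable_mem_sUnion hS hAD h𝒱 hcov)

/-- No cover of a scan `S` by open Hausdorff sets is point-`λ` on a
dense subset `E` of the Euclidean set `U`, for `λ < κ`. -/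
theorem stmt2 {M : Type u} [TopologicalSpace M] (n : ℕ)
    (hM : IsNManifold M n) (hENH : ∀ x : M, (NHpt x).Nonempty)
    (κ : Cardinal.{u}) (hκ : Cardinal.aleph 1 ≤ κ)
    (U : Set M) (hU : IsEuclidean n U)
    (A : Set M) (hAU : A ⊆ U) (hA : KappaBaire κ A)
    (S : Set M) (hS : IsScan S A)
    (E : Set M) (hEU : E ⊆ U) (hEdense : U ⊆ closure E)
    (lam : Cardinal.{u}) (hlam : lam < κ)
    (𝒱 : Set (Set M)) (h𝒱 : ∀ V ∈ 𝒱, IsOpen V ∧ T2Space V) :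
    ¬ (S ⊆ ⋃₀ 𝒱 ∧ ∀ x ∈ E, Cardinal.mk {V ∈ 𝒱 | x ∈ V} ≤ lam) := by
  have hκ' : ℵ₀ < κ := aleph0_lt_aleph_one.trans_le hκ
  have := hU.separableSpace_of_subset hEU
  obtain ⟨D, hDE, hDc, hED⟩ := exists_countable_subset_subset_closure E
  exact stmt2_general hκ'.le hA (fun x hx ↦ (hS.2 x hx).1 (hENH x)) hDE
    (hDc.le_aleph0.trans_lt hκ') hED (hAU.trans (interior_maximal hEdense hU.1)) hlam h𝒱
end

section
/- Let X be a Fréchet–Urysohn, locally Hausdorff space and let K ⊆ X be quasi-compact. Then NH(K) is closed and nowhere dense in X. -/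
open Set Topology TopologicalSpace

universe u

/-!
Two distinct points are inseparable exactly when the pair lies in the closure of the diagonal of
`X × X`. In a locally Hausdorff space the diagonal is locally closed, so inseparability is a closed
relation, and the preimage `NH K` of a compact set under a closed relation is closed.
For nowhere density, the points inseparable from a point of an open Hausdorff set `U` lie on the
frontier of `U`, and `K` is covered by finitely many such `U`.
-/

section NowhereDense

variable {X : Type*} [TopologicalSpace X] {s t U : Set X}

theorem isNowhereDense_union (hs : IsNowhereDense s) (ht : IsNowhereDense t) :
    IsNowhereDense (s ∪ t) := by
  rw [IsNowhereDense, closure_union,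
    interior_union_isClosed_of_interior_empty isClosed_closure ht, hs]

theorem isNowhereDense_frontier_of_isOpen_s13 (hU : IsOpen U) : IsNowhereDense (frontier U) := by
  rw [isClosed_frontier.isNowhereDense_iff, ← frontier_compl, interior_frontier hU.isClosed_compl]

end NowhereDense

section Diagonal

variable {X : Type u} [TopologicalSpace X] {x y : X} {U : Set X}

theorem eq_of_mem_closure_diagonal (hU : IsOpen U) [T2Space U] (hx : x ∈ U) (hy : y ∈ U)
    (hxy : (x, y) ∈ closure (diagonal X)) : x = y := by
  let ι : U × U → X × X := Prod.map (↑) (↑)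
  have hι_open : IsOpenMap ι := hU.isOpenMap_subtype_val.prodMap hU.isOpenMap_subtype_val
  have hι_cont : Continuous ι := continuous_subtype_val.prodMap continuous_subtype_val
  have hι_preimage : ι ⁻¹' closure (diagonal X) = diagonal U := by
    rw [hι_open.preimage_closure_eq_closure_preimage hι_cont, preimage_coe_coe_diagonal,
      isClosed_diagonal.closure_eq]
  have hmem : ((⟨x, hx⟩, ⟨y, hy⟩) : U × U) ∈ diagonal U := hι_preimage.subset hxy
  exact congrArg Subtype.val hmem

theorem LocallyHausdorff.isLocallyClosed_diagonal (hX : LocallyHausdorff X) :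
    IsLocallyClosed (diagonal X) := by
  refine ((isLocallyClosed_tfae _).out 0 3).mpr ?_
  rintro ⟨x, y⟩ (rfl : x = y)
  obtain ⟨U, hU, hxU, _⟩ := hX x
  refine ⟨U ×ˢ U, ⟨hxU, hxU⟩, hU.prod hU, ?_⟩
  rintro ⟨a, b⟩ ⟨⟨ha, hb⟩, hab⟩
  exact eq_of_mem_closure_diagonal hU ha hb hab

theorem mem_closure_diagonal_iff_forall_isOpen :
    (x, y) ∈ closure (diagonal X) ↔
      ∀ U V : Set X, IsOpen U → IsOpen V → x ∈ U → y ∈ V → (U ∩ V).Nonempty := by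
  rw [mem_closure_iff_nhds_basis ((nhds_basis_opens x).prod_nhds (nhds_basis_opens y))]
  constructor
  · intro h U V hU hV hx hy
    obtain ⟨⟨a, b⟩, (rfl : a = b), haU, haV⟩ := h (U, V) ⟨⟨hx, hU⟩, hy, hV⟩
    exact ⟨a, haU, haV⟩
  · rintro h ⟨U, V⟩ ⟨⟨hx, hU⟩, hy, hV⟩
    obtain ⟨a, haU, haV⟩ := h U V hU hV hx hy
    exact ⟨(a, a), rfl, haU, haV⟩

theorem bump_iff_mem_closure_diagonal_sdiff :
    Bump x y ↔ (x, y) ∈ closure (diagonal X) \ diagonal X := by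
  rw [mem_sdiff, mem_closure_diagonal_iff_forall_isOpen, mem_diagonal_iff, and_comm, Bump]

theorem LocallyHausdorff.isClosed_bump (hX : LocallyHausdorff X) :
    IsClosed {p : X × X | Bump p.1 p.2} := by
  simp only [bump_iff_mem_closure_diagonal_sdiff]
  exact isOpen_compl_iff.mp hX.isLocallyClosed_diagonal.isOpen_coborder

end Diagonal

section NH

variable {X : Type u} [TopologicalSpace X] {s t U K : Set X}

theorem LocallyHausdorff.isClosed_NH (hX : LocallyHausdorff X) (hK : IsCompact K) :
    IsClosed (NH K) :=
  hX.isClosed_bump.relPreimage_of_isCompact hK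

theorem NH_empty : NH (∅ : Set X) = ∅ := by
  simp [NH]

theorem NH_mono (hst : s ⊆ t) : NH s ⊆ NH t :=
  fun _ ⟨x, hx, hyx⟩ ↦ ⟨x, hst hx, hyx⟩

theorem NH_union (s t : Set X) : NH (s ∪ t) = NH s ∪ NH t := by
  ext y
  simp only [NH, mem_union, mem_ofPred_eq, or_and_right, exists_or]

theorem NH_subset_closure (hU : IsOpen U) : NH U ⊆ closure U := by
  rintro y ⟨x, hxU, -, hyx⟩
  exact mem_closure_iff.mpr fun V hV hyV ↦ hyx V U hV hU hyV hxU

theorem disjoint_NH_self (hU : IsOpen U) [T2Space U] : Disjoint (NH U) U := by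
  refine disjoint_left.mpr ?_
  rintro y ⟨x, hxU, hyx⟩ hyU
  obtain ⟨hmem, hne⟩ := bump_iff_mem_closure_diagonal_sdiff.mp hyx
  exact hne (eq_of_mem_closure_diagonal hU hyU hxU hmem)

theorem NH_subset_frontier (hU : IsOpen U) [T2Space U] : NH U ⊆ frontier U := by
  rw [hU.frontier_eq]
  exact subset_sdiff.mpr ⟨NH_subset_closure hU, disjoint_NH_self hU⟩

theorem LocallyHausdorff.isNowhereDense_NH (hX : LocallyHausdorff X) (hK : IsCompact K) :
    IsNowhereDense (NH K) := by
  refine hK.induction_on (p := fun s ↦ IsNowhereDense (NH s)) ?empty ?mono ?union ?nhds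
  case empty => simp only [NH_empty, isNowhereDense_empty]
  case mono => exact fun s t hst ht ↦ ht.mono (NH_mono hst)
  case union => exact fun s t hs ht ↦ NH_union s t ▸ isNowhereDense_union hs ht
  case nhds =>
    intro x _
    obtain ⟨U, hU, hxU, _⟩ := hX x
    exact ⟨U, mem_nhdsWithin_of_mem_nhds (hU.mem_nhds hxU),
      (isNowhereDense_frontier_of_isOpen_s13 hU).mono (NH_subset_frontier hU)⟩

theorem stmt13_general (hX : LocallyHausdorff X) (hK : IsCompact K) :
    IsClosed (NH K) ∧ IsNowhereDense (NH K) :=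
  ⟨hX.isClosed_NH hK, hX.isNowhereDense_NH hK⟩

end NH

/-- In a Fréchet–Urysohn locally Hausdorff space, `NH(K)` is closed
and nowhere dense for quasi-compact `K`. -/
theorem stmt13 {X : Type u} [TopologicalSpace X] [FrechetUrysohnSpace X]
    (hLH : LocallyHausdorff X) (K : Set X) (hK : IsCompact K) :
    IsClosed (NH K) ∧ IsNowhereDense (NH K) :=
  stmt13_general hLH hK
end
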